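/- Let ρ_0,…,ρ_{M-1} be a quantum state set whose Gram operator G = Σ_m ρ_m is positive definite, let X be a positive semidefinite operator with X ≥ ρ_m for all m, let 0 ≤ p ≤ 1, and define s(a) = Tr X + Tr((aG − X)_+) − a·p, t(a) = Tr(G · P_>(aG − X)), and t⁺(a) = Tr(G · P_≥(aG − X)) for a ≥ 0. Then a ≥ 0 minimizes s over [0,∞) (i.e., s(a) ≤ s(a') for all a' ≥ 0) if and only if t(a) ≤ p ≤ t⁺(a). -/

import Mathlib

/-!
Write `F a = Tr (aG - X)₊`. This is a convex function with left derivative `t a` and right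
derivative `t⁺ a`, so `s a = Tr X + F a - a p` is minimized at `a` exactly when `p` lies between
the two one-sided derivatives.

Two estimates carry this. First, `Tr (P B) ≤ Tr B₊` for `0 ≤ P ≤ 1`
(`re_trace_mul_le_posPart`); applied with `P = P_>(aG - X)` and `P = P_≥(aG - X)`, for which the
left side at `B = aG - X` equals `Tr B₊`, it shows that `t a` and `t⁺ a` are subgradients of `F`
at `a`, which gives sufficiency. Second, `Tr (A + εG)₊ ≤ Tr A₊ + ε (1 + η) Tr (G P_≥(A))` for
every `η > 0` and all small `ε > 0` (`exists_posPart_add_le`). This follows from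
`Tr B₊ ≤ Tr Y` for every `Y ≥ 0` with `Y ≥ B`, applied to `Y = A₊ + ε (1 + η) E G E` with
`E = P_≥(A)`: the off-diagonal blocks of `G` are absorbed by
`G ≤ (1 + η) E G E + (1 + η⁻¹) Q G Q`, `Q = 1 - E`, and the `Q`-block is dominated by the gap
between `0` and the negative spectrum of `A`. Moving to the right of `a` yields `p ≤ t⁺ a`.
Applying the same estimate to `-A` and using `A₊ = A + (-A)₊` and `P_>(A) = 1 - P_≥(-A)` yields
`t a ≤ p` when `a > 0`; at `a = 0` one has `t 0 = 0`, as `-X ≤ 0`.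
-/

open Matrix
open scoped ComplexOrder

/-- Positive part `A₊` of a Hermitian matrix (junk value `0` on non-Hermitian input). -/
noncomputable def matPosPart {n : ℕ} (A : Matrix (Fin n) (Fin n) ℂ) : Matrix (Fin n) (Fin n) ℂ :=
  if hA : A.IsHermitian then
    (hA.eigenvectorUnitary : Matrix (Fin n) (Fin n) ℂ) *
      Matrix.diagonal (fun i => if 0 < hA.eigenvalues i then (hA.eigenvalues i : ℂ) else 0) *
      star (hA.eigenvectorUnitary : Matrix (Fin n) (Fin n) ℂ)
  else 0

/-- Projection `P₍>₎(A)` onto the span of eigenvectors of positive eigenvalues. -/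
noncomputable def matProjPos {n : ℕ} (A : Matrix (Fin n) (Fin n) ℂ) : Matrix (Fin n) (Fin n) ℂ :=
  if hA : A.IsHermitian then
    (hA.eigenvectorUnitary : Matrix (Fin n) (Fin n) ℂ) *
      Matrix.diagonal (fun i => if 0 < hA.eigenvalues i then (1 : ℂ) else 0) *
      star (hA.eigenvectorUnitary : Matrix (Fin n) (Fin n) ℂ)
  else 0

/-- Projection `P₍≥₎(A)` onto the span of eigenvectors of nonnegative eigenvalues. -/
noncomputable def matProjNonneg {n : ℕ} (A : Matrix (Fin n) (Fin n) ℂ) : Matrix (Fin n) (Fin n) ℂ :=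
  if hA : A.IsHermitian then
    (hA.eigenvectorUnitary : Matrix (Fin n) (Fin n) ℂ) *
      Matrix.diagonal (fun i => if 0 ≤ hA.eigenvalues i then (1 : ℂ) else 0) *
      star (hA.eigenvectorUnitary : Matrix (Fin n) (Fin n) ℂ)
  else 0

section aux

open scoped MatrixOrder

variable {n : ℕ} {A B G P X Y : Matrix (Fin n) (Fin n) ℂ}

/-! ### The spectral definitions as functional calculus -/

/-- Every real function is continuous on the finite spectrum of a matrix. -/
lemma continuousOn_matSpectrum (A : Matrix (Fin n) (Fin n) ℂ) (f : ℝ → ℝ) :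
    ContinuousOn f (spectrum ℝ A) :=
  A.finite_real_spectrum.continuousOn f

lemma matPosPart_eq (hA : A.IsHermitian) : matPosPart A = cfc (fun x : ℝ => max x 0) A := by
  rw [hA.cfc_eq, matPosPart, dif_pos hA, IsHermitian.cfc, Unitary.conjStarAlgAut_apply]
  congr 3
  funext i
  by_cases h : 0 < hA.eigenvalues i
  · simp [h, h.le]
  · simp [h, not_lt.1 h]

lemma matProjPos_eq (hA : A.IsHermitian) :
    matProjPos A = cfc (fun x : ℝ => if 0 < x then 1 else 0) A := by
  rw [hA.cfc_eq, matProjPos, dif_pos hA, IsHermitian.cfc, Unitary.conjStarAlgAut_apply]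
  congr 3
  funext i
  by_cases h : 0 < hA.eigenvalues i <;> simp [h]

lemma matProjNonneg_eq (hA : A.IsHermitian) :
    matProjNonneg A = cfc (fun x : ℝ => if 0 ≤ x then 1 else 0) A := by
  rw [hA.cfc_eq, matProjNonneg, dif_pos hA, IsHermitian.cfc, Unitary.conjStarAlgAut_apply]
  congr 3
  funext i
  by_cases h : 0 ≤ hA.eigenvalues i <;> simp [h]

lemma matPosPart_nonneg (hA : A.IsHermitian) : 0 ≤ matPosPart A := by
  rw [matPosPart_eq hA]
  exact cfc_nonneg fun x _ => le_max_right _ _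

lemma le_matPosPart (hA : A.IsHermitian) : A ≤ matPosPart A := by
  rw [matPosPart_eq hA]
  conv_lhs => rw [← cfc_id' ℝ A hA.isSelfAdjoint]
  exact cfc_mono (fun x _ => le_max_left _ _) (continuousOn_matSpectrum _ _)
    (continuousOn_matSpectrum _ _)

lemma matProjPos_nonneg (hA : A.IsHermitian) : 0 ≤ matProjPos A := by
  rw [matProjPos_eq hA]
  exact cfc_nonneg fun x _ => by split_ifs <;> norm_num

lemma matProjPos_le_one (hA : A.IsHermitian) : matProjPos A ≤ 1 := by
  rw [matProjPos_eq hA]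
  exact cfc_le_one _ _ fun x _ => by split_ifs <;> norm_num

lemma matProjNonneg_nonneg (hA : A.IsHermitian) : 0 ≤ matProjNonneg A := by
  rw [matProjNonneg_eq hA]
  exact cfc_nonneg fun x _ => by split_ifs <;> norm_num

lemma matProjNonneg_le_one (hA : A.IsHermitian) : matProjNonneg A ≤ 1 := by
  rw [matProjNonneg_eq hA]
  exact cfc_le_one _ _ fun x _ => by split_ifs <;> norm_num

lemma matProjNonneg_mul_self (hA : A.IsHermitian) :
    matProjNonneg A * matProjNonneg A = matProjNonneg A := by
  rw [matProjNonneg_eq hA, ← cfc_mul _ _ A (continuousOn_matSpectrum _ _)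
    (continuousOn_matSpectrum _ _)]
  refine cfc_congr fun x _ => ?_
  split_ifs <;> norm_num

lemma matProjPos_mul (hA : A.IsHermitian) : matProjPos A * A = matPosPart A := by
  rw [matProjPos_eq hA, matPosPart_eq hA]
  nth_rewrite 2 [← cfc_id' ℝ A hA.isSelfAdjoint]
  rw [← cfc_mul _ _ A (continuousOn_matSpectrum _ _) (continuousOn_matSpectrum _ _)]
  refine cfc_congr fun x _ => ?_
  split_ifs with h
  · simp [h.le]
  · simp [not_lt.1 h]

lemma matProjNonneg_mul (hA : A.IsHermitian) : matProjNonneg A * A = matPosPart A := by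
  rw [matProjNonneg_eq hA, matPosPart_eq hA]
  nth_rewrite 2 [← cfc_id' ℝ A hA.isSelfAdjoint]
  rw [← cfc_mul _ _ A (continuousOn_matSpectrum _ _) (continuousOn_matSpectrum _ _)]
  refine cfc_congr fun x _ => ?_
  split_ifs with h
  · simp [h]
  · simp [(not_le.1 h).le]

/-- Jordan decomposition `A = A₊ - (-A)₊`. -/
lemma matPosPart_eq_add_neg (hA : A.IsHermitian) : matPosPart A = A + matPosPart (-A) := by
  rw [matPosPart_eq hA, matPosPart_eq hA.neg,
    ← cfc_comp_neg _ A ((A.finite_real_spectrum.image _).continuousOn _) hA.isSelfAdjoint]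
  nth_rewrite 2 [← cfc_id' ℝ A hA.isSelfAdjoint]
  rw [← cfc_add A _ _ (continuousOn_matSpectrum _ _) (continuousOn_matSpectrum _ _)]
  refine cfc_congr fun x _ => ?_
  rcases le_total 0 x with h | h
  · simp [h]
  · simp [h]

lemma matProjNonneg_neg (hA : A.IsHermitian) : matProjNonneg (-A) = 1 - matProjPos A := by
  rw [matProjNonneg_eq hA.neg, matProjPos_eq hA,
    ← cfc_comp_neg _ A ((A.finite_real_spectrum.image _).continuousOn _) hA.isSelfAdjoint,
    ← cfc_one ℝ A hA.isSelfAdjoint,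
    ← cfc_sub _ _ A (continuousOn_matSpectrum _ _) (continuousOn_matSpectrum _ _)]
  refine cfc_congr fun x _ => ?_
  by_cases h : 0 < x
  · simp [h, not_le.2 h]
  · simp [h, not_lt.1 h]

lemma matProjPos_neg_of_nonneg (hX : 0 ≤ X) : matProjPos (-X) = 0 := by
  have hX' : X.IsHermitian := hX.posSemidef.isHermitian
  rw [matProjPos_eq hX'.neg,
    ← cfc_comp_neg _ X ((X.finite_real_spectrum.image _).continuousOn _) hX'.isSelfAdjoint,
    ← cfc_const_zero ℝ X]
  refine cfc_congr fun x hx => ?_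
  have h0 : 0 ≤ x := spectrum_nonneg_of_nonneg hX hx
  simp [h0]

/-- The gap between `0` and the negative spectrum of `A` bounds `A₋ = A₊ - A` from below. -/
lemma exists_gap (hA : A.IsHermitian) :
    ∃ δ : ℝ, 0 < δ ∧ δ • (1 - matProjNonneg A) ≤ matPosPart A - A := by
  obtain ⟨δ, hδ, h⟩ : ∃ δ : ℝ, 0 < δ ∧ ∀ x ∈ spectrum ℝ A, x < 0 → δ ≤ -x := by
    have hfin : ∀ S : Set ℝ, S.Finite → ∃ δ : ℝ, 0 < δ ∧ ∀ x ∈ S, x < 0 → δ ≤ -x := by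
      intro S hS
      induction S, hS using Set.Finite.induction_on with
      | empty => exact ⟨1, one_pos, by simp⟩
      | @insert y S _ _ ih =>
        obtain ⟨δ, hδ, h⟩ := ih
        by_cases hy : y < 0
        · refine ⟨min δ (-y), lt_min hδ (by linarith), ?_⟩
          rintro x (rfl | hx) h0
          · exact min_le_right _ _
          · exact (min_le_left _ _).trans (h x hx h0)
        · refine ⟨δ, hδ, ?_⟩
          rintro x (rfl | hx) h0
          · exact absurd h0 hy
          · exact h x hx h0
    exact hfin _ A.finite_real_spectrum
  refine ⟨δ, hδ, ?_⟩
  rw [matProjNonneg_eq hA, matPosPart_eq hA]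
  nth_rewrite 3 [← cfc_id' ℝ A hA.isSelfAdjoint]
  rw [← cfc_one ℝ A hA.isSelfAdjoint,
    ← cfc_sub _ _ A (continuousOn_matSpectrum _ _) (continuousOn_matSpectrum _ _),
    ← cfc_sub _ _ A (continuousOn_matSpectrum _ _) (continuousOn_matSpectrum _ _),
    ← cfc_smul _ _ A (continuousOn_matSpectrum _ _)]
  refine cfc_mono (fun x hx => ?_) (continuousOn_matSpectrum _ _) (continuousOn_matSpectrum _ _)
  by_cases h0 : 0 ≤ x
  · simp [h0]
  · have h1 := h x hx (not_le.1 h0)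
    simpa [h0, (not_le.1 h0).le] using h1

lemma exists_le_smul_one (hG : G.IsHermitian) : ∃ g : ℝ, 0 < g ∧ G ≤ g • 1 := by
  obtain ⟨g, hg⟩ := G.finite_real_spectrum.bddAbove
  refine ⟨max g 1, by positivity, ?_⟩
  rw [← Algebra.algebraMap_eq_smul_one]
  exact le_algebraMap_of_spectrum_le (fun x hx => (hg hx).trans (le_max_left _ _))
    hG.isSelfAdjoint

/-! ### Trace inequalities -/

lemma re_trace_mul_nonneg (hA : 0 ≤ A) (hB : 0 ≤ B) : 0 ≤ (A * B).trace.re := by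
  obtain ⟨C, rfl⟩ := CStarAlgebra.nonneg_iff_eq_star_mul_self.1 hB
  rw [← mul_assoc, Matrix.trace_mul_comm, ← mul_assoc]
  exact (Complex.le_def.1 (hA.posSemidef.mul_mul_conjTranspose_same C).trace_nonneg).1

lemma re_trace_mul_le_mul_left (hP : 0 ≤ P) (h : A ≤ B) :
    (P * A).trace.re ≤ (P * B).trace.re := by
  have := re_trace_mul_nonneg hP (sub_nonneg.2 h)
  rw [mul_sub, Matrix.trace_sub, Complex.sub_re] at this
  linarith

lemma re_trace_mul_le_of_le_one (hP : P ≤ 1) (hA : 0 ≤ A) :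
    (P * A).trace.re ≤ A.trace.re := by
  have := re_trace_mul_nonneg (sub_nonneg.2 hP) hA
  rw [sub_mul, one_mul, Matrix.trace_sub, Complex.sub_re] at this
  linarith

lemma re_trace_mul_le_posPart (hB : B.IsHermitian) (hP : 0 ≤ P) (hP1 : P ≤ 1) :
    (P * B).trace.re ≤ (matPosPart B).trace.re :=
  (re_trace_mul_le_mul_left hP (le_matPosPart hB)).trans
    (re_trace_mul_le_of_le_one hP1 (matPosPart_nonneg hB))

/-- `B₊` has the least trace among the positive semidefinite upper bounds of `B`. -/
lemma re_trace_posPart_le (hB : B.IsHermitian) (hY : 0 ≤ Y) (hBY : B ≤ Y) :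
    (matPosPart B).trace.re ≤ Y.trace.re := by
  rw [← matProjPos_mul hB]
  exact (re_trace_mul_le_mul_left (matProjPos_nonneg hB) hBY).trans
    (re_trace_mul_le_of_le_one (matProjPos_le_one hB) hY)

/-! ### One-sided derivatives of the trace of the positive part -/

/-- Young's inequality for the off-diagonal blocks of `G`. -/
lemma le_pinching (hG : 0 ≤ G) (hP : P.IsHermitian) {η : ℝ} (hη : 0 < η) :
    G ≤ (1 + η) • (P * G * P) + (1 + η⁻¹) • ((1 - P) * G * (1 - P)) := by
  rw [← sub_nonneg]
  -- The difference is `C G C` with `C = √η P - √η⁻¹ (1 - P)`; clearing `√η` gives this form.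
  have hC : (η • P - (1 - P)).IsHermitian := by
    have h1 : (1 - P).IsHermitian := Matrix.isHermitian_one.sub hP
    have h2 : (η • P).IsHermitian := by
      simp [Matrix.IsHermitian, Matrix.conjTranspose_smul, hP.eq]
    exact h2.sub h1
  have h := smul_nonneg (inv_nonneg.2 hη.le)
    (hC.isSelfAdjoint.conjugate_nonneg hG)
  convert h using 1
  have e : η⁻¹ * η = 1 := inv_mul_cancel₀ hη.ne'
  have key : ∀ Q : Matrix (Fin n) (Fin n) ℂ, η⁻¹ • ((η • P - Q) * G * (η • P - Q)) =
      η • (P * G * P) + η⁻¹ • (Q * G * Q) - P * G * Q - Q * G * P := by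
    intro Q
    simp only [sub_mul, mul_sub, smul_mul_assoc, mul_smul_comm, smul_sub, smul_smul, ← mul_assoc,
      e, one_mul, one_smul]
    abel
  rw [key]
  have hsum : G = P * G * P + (1 - P) * G * (1 - P) + P * G * (1 - P) + (1 - P) * G * P := by
    noncomm_ring
  nth_rewrite 3 [hsum]
  rw [add_smul, add_smul, one_smul, one_smul]
  abel

/-- The right derivative of `ε ↦ Tr (A + εG)₊` at `0` is at most `Tr (G P_≥(A))`. -/
lemma exists_posPart_add_le (hA : A.IsHermitian) (hG : 0 ≤ G) {η : ℝ} (hη : 0 < η) :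
    ∃ ε₀ : ℝ, 0 < ε₀ ∧ ∀ ε : ℝ, 0 < ε → ε ≤ ε₀ →
      (matPosPart (A + ε • G)).trace.re ≤
        (matPosPart A).trace.re + ε * ((1 + η) * (G * matProjNonneg A).trace.re) := by
  obtain ⟨δ, hδ, hgap⟩ := exists_gap hA
  obtain ⟨g, hg, hGg⟩ := exists_le_smul_one hG.posSemidef.isHermitian
  have hk : 0 < (1 + η⁻¹) * g := by positivity
  refine ⟨δ / ((1 + η⁻¹) * g), by positivity, fun ε hε hε' => ?_⟩
  set E := matProjNonneg A with hE
  have hEh : E.IsHermitian := (matProjNonneg_nonneg hA).posSemidef.isHermitian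
  have hE2 : E * E = E := matProjNonneg_mul_self hA
  have hQ0 : 0 ≤ 1 - E := sub_nonneg.2 (matProjNonneg_le_one hA)
  have hQQ : (1 - E) * (1 - E) = 1 - E := by
    simp only [sub_mul, mul_sub, one_mul, mul_one, hE2]
    abel
  have hQGQ : (1 - E) * G * (1 - E) ≤ g • (1 - E) := by
    have := hQ0.posSemidef.isHermitian.isSelfAdjoint.conjugate_le_conjugate hGg
    rwa [mul_smul_comm, smul_mul_assoc, mul_one, hQQ] at this
  have hEG : 0 ≤ E * G * E := hEh.isSelfAdjoint.conjugate_nonneg hG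
  have hηp : (0 : ℝ) ≤ 1 + η := by positivity
  have hY : 0 ≤ matPosPart A + ε • ((1 + η) • (E * G * E)) :=
    add_nonneg (matPosPart_nonneg hA) (smul_nonneg hε.le (smul_nonneg hηp hEG))
  have hGh : (ε • G).IsHermitian := (smul_nonneg hε.le hG).posSemidef.isHermitian
  have hle : A + ε • G ≤ matPosPart A + ε • ((1 + η) • (E * G * E)) := by
    have h1 : ε • G ≤ ε • ((1 + η) • (E * G * E) + (1 + η⁻¹) • ((1 - E) * G * (1 - E))) :=
      smul_le_smul_of_nonneg_left (le_pinching hG hEh hη) hε.le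
    have h2 : ε • ((1 + η⁻¹) • ((1 - E) * G * (1 - E))) ≤ ε • ((1 + η⁻¹) • (g • (1 - E))) :=
      smul_le_smul_of_nonneg_left
        (smul_le_smul_of_nonneg_left hQGQ (by positivity)) hε.le
    have h3 : ε • ((1 + η⁻¹) • (g • (1 - E))) ≤ δ • (1 - E) := by
      rw [smul_smul, smul_smul]
      refine smul_le_smul_of_nonneg_right ?_ hQ0
      rw [le_div_iff₀ hk] at hε'
      linarith
    rw [smul_add] at h1
    calc A + ε • G
        ≤ A + (ε • ((1 + η) • (E * G * E)) + (matPosPart A - A)) := by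
          gcongr
          refine h1.trans ?_
          gcongr
          exact (h2.trans h3).trans hgap
      _ = _ := by abel
  refine (re_trace_posPart_le (hA.add hGh) hY hle).trans (le_of_eq ?_)
  have htr : (E * G * E).trace = (G * E).trace := by
    rw [Matrix.trace_mul_comm, ← mul_assoc, hE2, Matrix.trace_mul_comm]
  rw [Matrix.trace_add, Matrix.trace_smul, Matrix.trace_smul, htr, Complex.add_re,
    Complex.smul_re, Complex.smul_re, smul_eq_mul, smul_eq_mul]

/-- If `P` attains the maximum in `Tr (P A) ≤ Tr A₊`, then `Tr (G P)` is a subgradient at `0` of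
`ε ↦ Tr (A + εG)₊`. -/
lemma posPart_subgradient (hA : A.IsHermitian) (hG : G.IsHermitian) (hP : 0 ≤ P) (hP1 : P ≤ 1)
    (hPA : P * A = matPosPart A) (ε : ℝ) :
    (matPosPart A).trace.re + ε * (G * P).trace.re ≤ (matPosPart (A + ε • G)).trace.re := by
  have hGh : (ε • G).IsHermitian := by
    simp [Matrix.IsHermitian, Matrix.conjTranspose_smul, hG.eq]
  have h := re_trace_mul_le_posPart (hA.add hGh) hP hP1
  rwa [mul_add, hPA, mul_smul_comm, Matrix.trace_add, Matrix.trace_smul, Matrix.trace_mul_comm P G,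
    Complex.add_re, Complex.smul_re, smul_eq_mul] at h

lemma le_of_forall_add_mul_le {x y c : ℝ} (h : ∀ η : ℝ, 0 < η → x ≤ y + η * c) : x ≤ y := by
  refine le_of_forall_pos_le_add fun e he => ?_
  have hc : 0 < |c| + 1 := by positivity
  refine (h (e / (|c| + 1)) (by positivity)).trans ?_
  have h2 : e / (|c| + 1) * c ≤ e / (|c| + 1) * (|c| + 1) :=
    mul_le_mul_of_nonneg_left (by linarith [le_abs_self c]) (by positivity)
  rw [div_mul_cancel₀ _ hc.ne'] at h2
  linarith

end aux

/-- With `s(a) = Tr X + Tr((aG − X)₊) − a·p`,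
`t(a) = Tr(G·P₍>₎(aG − X))` and `t⁺(a) = Tr(G·P₍≥₎(aG − X))`, a point `a ≥ 0`
minimizes `s` over `[0,∞)` iff `t(a) ≤ p ≤ t⁺(a)`. -/
theorem stmt_14 {n M : ℕ} (hM : 0 < M) (ρ : ℕ → Matrix (Fin n) (Fin n) ℂ)
    (hρ : ∀ m < M, (ρ m).PosSemidef)
    (hρpos : ∀ m < M, 0 < (ρ m).trace.re)
    (hρsum : ∑ m ∈ Finset.range M, (ρ m).trace.re = 1)
    (G : Matrix (Fin n) (Fin n) ℂ) (hG : G = ∑ m ∈ Finset.range M, ρ m)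
    (hGpd : G.PosDef)
    (X : Matrix (Fin n) (Fin n) ℂ) (hX : X.PosSemidef)
    (hXρ : ∀ m < M, (X - ρ m).PosSemidef)
    (p : ℝ) (hp0 : 0 ≤ p) (hp1 : p ≤ 1)
    (s t tplus : ℝ → ℝ)
    (hs : ∀ a : ℝ, s a = X.trace.re + (matPosPart ((a : ℂ) • G - X)).trace.re - a * p)
    (ht : ∀ a : ℝ, t a = (G * matProjPos ((a : ℂ) • G - X)).trace.re)
    (htplus : ∀ a : ℝ, tplus a = (G * matProjNonneg ((a : ℂ) • G - X)).trace.re)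
    (a : ℝ) (ha : 0 ≤ a) :
    (∀ a' : ℝ, 0 ≤ a' → s a ≤ s a') ↔ (t a ≤ p ∧ p ≤ tplus a) := by
  have hGn := hGpd.posSemidef.nonneg
  have hGh : G.IsHermitian := hGpd.isHermitian
  have hshift : ∀ a' : ℝ, (a' : ℂ) • G - X = ((a : ℂ) • G - X) + (a' - a) • G := by
    intro a'
    rw [Complex.coe_smul, Complex.coe_smul, sub_smul]
    abel
  have hs' : ∀ a' : ℝ, s a' = X.trace.re +
      (matPosPart (((a : ℂ) • G - X) + (a' - a) • G)).trace.re - a' * p := by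
    intro a'
    rw [hs, hshift a']
  have hA : ((a : ℂ) • G - X).IsHermitian := by
    rw [Complex.coe_smul]
    refine Matrix.IsHermitian.sub ?_ hX.isHermitian
    simp [Matrix.IsHermitian, Matrix.conjTranspose_smul, hGh.eq]
  have ht0 : a = 0 → t a = 0 := by
    rintro rfl
    rw [ht, Complex.ofReal_zero, zero_smul, zero_sub, matProjPos_neg_of_nonneg hX.nonneg, mul_zero,
      Matrix.trace_zero, Complex.zero_re]
  have hsa := hs a
  have hta := ht a
  have htpa := htplus a
  generalize (a : ℂ) • G - X = A at *
  constructor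
  · intro hmin
    refine ⟨?_, ?_⟩
    · rcases ha.eq_or_lt with h0 | hapos
      · rw [ht0 h0.symm]
        exact hp0
      · refine le_of_forall_add_mul_le (c := G.trace.re - t a) fun η hη => ?_
        obtain ⟨ε₀, hε₀, hε⟩ := exists_posPart_add_le hA.neg hGn hη
        have hm : 0 < min ε₀ a := lt_min hε₀ hapos
        have h1 := hε _ hm (min_le_left _ _)
        have h2 := hmin (a - min ε₀ a) (by linarith [min_le_right ε₀ a])
        rw [hsa, hs'] at h2
        have e : a - min ε₀ a - a = -min ε₀ a := by ring
        rw [e] at h2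
        generalize min ε₀ a = ε at *
        have hB : (A + (-ε) • G).IsHermitian := by
          refine hA.add ?_
          simp [Matrix.IsHermitian, Matrix.conjTranspose_smul, hGh.eq]
        have e2 : -(A + (-ε) • G) = -A + ε • G := by
          rw [neg_smul]
          abel
        rw [matPosPart_eq_add_neg hB, matPosPart_eq_add_neg hA, e2] at h2
        rw [matProjNonneg_neg hA, mul_sub, mul_one] at h1
        simp only [Matrix.trace_add, Matrix.trace_sub, Matrix.trace_smul, Complex.add_re,
          Complex.sub_re, Complex.smul_re, smul_eq_mul, ← hta] at h1 h2
        have h3 : 0 ≤ ε * (p + η * (G.trace.re - t a) - t a) := by linarith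
        linarith [nonneg_of_mul_nonneg_right h3 hm]
    · refine le_of_forall_add_mul_le (c := tplus a) fun η hη => ?_
      obtain ⟨ε, hm, hε⟩ := exists_posPart_add_le hA hGn hη
      have h1 := hε _ hm le_rfl
      have h2 := hmin (a + ε) (by linarith)
      rw [hsa, hs', add_sub_cancel_left] at h2
      rw [← htpa] at h1
      have h3 : 0 ≤ ε * (tplus a + η * tplus a - p) := by linarith
      linarith [nonneg_of_mul_nonneg_right h3 hm]
  · rintro ⟨h1, h2⟩ a' -
    rw [hsa, hs']
    rcases le_total a' a with h | h
    · have h3 := posPart_subgradient hA hGh (matProjPos_nonneg hA) (matProjPos_le_one hA)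
        (matProjPos_mul hA) (a' - a)
      rw [← hta] at h3
      linarith [mul_le_mul_of_nonpos_left h1 (sub_nonpos.2 h)]
    · have h3 := posPart_subgradient hA hGh (matProjNonneg_nonneg hA) (matProjNonneg_le_one hA)
        (matProjNonneg_mul hA) (a' - a)
      rw [← htpa] at h3
      linarith [mul_le_mul_of_nonneg_left h2 (sub_nonneg.2 h)]
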